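/- arXiv:2604.28015 — 3 statements merged into one kernel-verified Lean document; each statement's English description precedes it below -/
import Mathlib

section
/- Let G be a group, let E be a field of characteristic p, and let n be a positive integer with p > n. If ρ₁, ρ₂ : G → GL_n(E) are semisimple representations such that tr(ρ₁(g)) = tr(ρ₂(g)) for all g ∈ G, then ρ₁ and ρ₂ are isomorphic representations. -/
namespace BN

open Module

/-- If there are no nonzero homomorphisms in either direction, density gives an element acting as
the identity on `M` and as zero on `N`. -/
theorem exists_sep {E A M N : Type*} [Field E] [Ring A] [Algebra E A]
    [AddCommGroup M] [Module E M] [Module A M] [IsScalarTower E A M] [Module.Finite E M]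
    [AddCommGroup N] [Module E N] [Module A N] [IsScalarTower E A N] [Module.Finite E N]
    [IsSemisimpleModule A M] [IsSemisimpleModule A N]
    (h1 : ∀ f : M →ₗ[A] N, f = 0) (h2 : ∀ f : N →ₗ[A] M, f = 0) :
    ∃ a : A, (∀ m : M, a • m = m) ∧ (∀ x : N, a • x = 0) := by
  let P : Module.End (Module.End A (M × N)) (M × N) :=
    { toFun := fun x => (x.1, 0)
      map_add' := fun x y => by simp
      map_smul' := fun φ x => by
        have e1 : ∀ y : N, (φ (0, y)).1 = 0 := fun y => by
          have := LinearMap.congr_fun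
            (h2 (LinearMap.fst A M N ∘ₗ φ ∘ₗ LinearMap.inr A M N)) y
          simpa using this
        have e2 : ∀ y : M, (φ (y, 0)).2 = 0 := fun y => by
          have := LinearMap.congr_fun
            (h1 (LinearMap.snd A M N ∘ₗ φ ∘ₗ LinearMap.inl A M N)) y
          simpa using this
        have e3 : φ x = φ (x.1, 0) + φ (0, x.2) := by
          rw [← map_add]; simp
        simp only [Module.End.smul_def, RingHom.id_apply]
        ext
        · simp [e3, e1]
        · simp [e2] }
  have : IsSemisimpleModule A (M × N) := by
    have h := IsSemisimpleModule.sup (IsSemisimpleModule.range (LinearMap.inl A M N))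
      (IsSemisimpleModule.range (LinearMap.inr A M N))
    rw [LinearMap.sup_range_inl_inr] at h
    exact IsSemisimpleModule.congr Submodule.topEquiv.symm
  obtain ⟨s, hs⟩ := (Module.Finite.fg_top : (⊤ : Submodule E (M × N)).FG)
  obtain ⟨a, ha⟩ := jacobson_density (R := A) P s
  have key : ∀ x : M × N, a • x = (x.1, 0) := by
    intro x
    have hx : x ∈ Submodule.span E (s : Set (M × N)) := hs ▸ trivial
    induction hx using Submodule.span_induction with
    | mem m hm => exact (ha m hm).symm
    | zero => rw [smul_zero]; rfl
    | add x y _ _ hx hy => rw [smul_add, hx, hy]; simp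
    | smul c x _ hx => rw [smul_algebra_smul_comm, hx]; simp
  refine ⟨a, fun m => ?_, fun x => ?_⟩
  · simpa using congrArg Prod.fst (key (m, 0))
  · simpa using congrArg Prod.snd (key (0, x))

/-- The trace of `a` acting on `M`. -/
noncomputable def tr (E : Type*) {A : Type*} (M : Type*) [Field E] [Ring A] [Algebra E A]
    [AddCommGroup M] [Module E M] [Module A M] [IsScalarTower E A M] (a : A) : E :=
  LinearMap.trace E M (Algebra.lsmul E E M a)

theorem tr_equiv {E A M N : Type*} [Field E] [Ring A] [Algebra E A]
    [AddCommGroup M] [Module E M] [Module A M] [IsScalarTower E A M]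
    [AddCommGroup N] [Module E N] [Module A N] [IsScalarTower E A N]
    (e : M ≃ₗ[A] N) (a : A) : tr E M a = tr E N a := by
  unfold tr
  rw [← LinearMap.trace_conj' _ (e.restrictScalars E)]
  congr 1
  ext x
  simp [LinearEquiv.conj_apply]

theorem tr_prod {E A M N : Type*} [Field E] [Ring A] [Algebra E A]
    [AddCommGroup M] [Module E M] [Module A M] [IsScalarTower E A M] [Module.Finite E M]
    [AddCommGroup N] [Module E N] [Module A N] [IsScalarTower E A N] [Module.Finite E N]
    (a : A) : tr E (M × N) a = tr E M a + tr E N a := by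
  unfold tr
  rw [← LinearMap.trace_prodMap']
  congr 1

universe u v w

/-- The inductive step: split off a common constituent. -/
theorem step {E : Type u} {A : Type v} [Field E] [Ring A] [Algebra E A]
    {M N : Type w}
    [AddCommGroup M] [Module E M] [Module A M] [IsScalarTower E A M] [Module.Finite E M]
    [AddCommGroup N] [Module E N] [Module A N] [IsScalarTower E A N] [Module.Finite E N]
    [IsSemisimpleModule A M] [IsSemisimpleModule A N]
    (f : M →ₗ[A] N) (hf : f ≠ 0)
    (htr : ∀ a : A, tr E M a = tr E N a)
    (ih : ∀ (K : Submodule A M) (D : Submodule A N), finrank E K < finrank E M →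
      finrank E D < finrank E N →
      (∀ a : A, tr E K a = tr E D a) → Nonempty (K ≃ₗ[A] D)) :
    Nonempty (M ≃ₗ[A] N) := by
  obtain ⟨C, hC⟩ := exists_isCompl (LinearMap.ker f)
  obtain ⟨D, hD⟩ := exists_isCompl (LinearMap.range f)
  have : Module.Finite E C := inferInstanceAs (Module.Finite E (C.restrictScalars E))
  have : Module.Finite E D := inferInstanceAs (Module.Finite E (D.restrictScalars E))
  have : Module.Finite E (LinearMap.ker f) :=
    inferInstanceAs (Module.Finite E ((LinearMap.ker f).restrictScalars E))
  have : Module.Finite E (LinearMap.range f) :=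
    inferInstanceAs (Module.Finite E ((LinearMap.range f).restrictScalars E))
  let eM := Submodule.prodEquivOfIsCompl _ _ hC
  let eN := Submodule.prodEquivOfIsCompl _ _ hD
  let eC : C ≃ₗ[A] LinearMap.range f :=
    (Submodule.quotientEquivOfIsCompl _ _ hC).symm ≪≫ₗ f.quotKerEquivRange
  have dM := (eM.restrictScalars E).finrank_eq
  have dN := (eN.restrictScalars E).finrank_eq
  have dC := (eC.restrictScalars E).finrank_eq
  rw [Module.finrank_prod] at dM dN
  have hpos : 0 < finrank E (LinearMap.range f) := by
    rw [Module.finrank_pos_iff, Submodule.nontrivial_iff_ne_bot]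
    simpa [LinearMap.range_eq_bot] using hf
  obtain ⟨g⟩ := ih (LinearMap.ker f) D (by omega) (by omega) (fun a => by
    have h1 := htr a
    rw [← tr_equiv eM, ← tr_equiv eN, tr_prod, tr_prod, tr_equiv eC, add_comm] at h1
    exact add_left_cancel h1)
  exact ⟨eM.symm ≪≫ₗ LinearEquiv.prodCongr g eC ≪≫ₗ LinearEquiv.prodComm A _ _ ≪≫ₗ eN⟩

theorem tr_one {E : Type u} (A : Type v) [Field E] [Ring A] [Algebra E A] (M : Type w)
    [AddCommGroup M] [Module E M] [Module A M] [IsScalarTower E A M] [Module.Finite E M] :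
    tr E M (1 : A) = (finrank E M : E) := by
  unfold tr
  rw [map_one, LinearMap.trace_one]

theorem main {E : Type u} {A : Type v} [Field E] [Ring A] [Algebra E A]
    (p : ℕ) [CharP E p] (d : ℕ) :
    ∀ (M N : Type w)
    [AddCommGroup M] [Module E M] [Module A M] [IsScalarTower E A M] [Module.Finite E M]
    [AddCommGroup N] [Module E N] [Module A N] [IsScalarTower E A N] [Module.Finite E N]
    [IsSemisimpleModule A M] [IsSemisimpleModule A N],
    finrank E M < p → finrank E N < p → finrank E M = d →
    (∀ a : A, tr E M a = tr E N a) → Nonempty (M ≃ₗ[A] N) := by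
  induction d using Nat.strong_induction_on with
  | _ d ih =>
  intro M N _ _ _ _ _ _ _ _ _ _ _ _ hM hN hd htr
  have hMN : finrank E M = finrank E N := by
    have h := htr 1
    rw [tr_one, tr_one] at h
    exact CharP.natCast_injOn_Iio E p hM hN h
  by_cases h1 : ∀ f : M →ₗ[A] N, f = 0
  · by_cases h2 : ∀ f : N →ₗ[A] M, f = 0
    · obtain ⟨a, ha, ha'⟩ := exists_sep (E := E) h1 h2
      have t1 : tr E M a = (finrank E M : E) := by
        rw [← tr_one A M]
        unfold tr
        congr 1
        ext x
        simp [ha]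
      have t2 : tr E N a = 0 := by
        have : Algebra.lsmul E E N a = 0 := by
          ext x
          simp [ha']
        unfold tr
        rw [this, map_zero]
      have h0 : finrank E M = 0 := by
        have h := htr a
        rw [t1, t2] at h
        exact CharP.natCast_injOn_Iio E p hM (show 0 < p by omega) (by simpa using h)
      have : Subsingleton M := Module.finrank_zero_iff.mp h0
      have : Subsingleton N := Module.finrank_zero_iff.mp (hMN ▸ h0)
      exact ⟨0⟩
    · push Not at h2
      obtain ⟨f, hf⟩ := h2
      obtain ⟨e⟩ := step (E := E) f hf (fun a => (htr a).symm) (fun K D hK hD h => by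
        have : Module.Finite E K := inferInstanceAs (Module.Finite E (K.restrictScalars E))
        have : Module.Finite E D := inferInstanceAs (Module.Finite E (D.restrictScalars E))
        exact ih _ (by omega) K D (by omega) (by omega) rfl h)
      exact ⟨e.symm⟩
  · push Not at h1
    obtain ⟨f, hf⟩ := h1
    exact step (E := E) f hf htr (fun K D hK hD h => by
      have : Module.Finite E K := inferInstanceAs (Module.Finite E (K.restrictScalars E))
      have : Module.Finite E D := inferInstanceAs (Module.Finite E (D.restrictScalars E))
      exact ih _ (by omega) K D (by omega) (by omega) rfl h)

theorem tr_asModule {G E V : Type*} [Group G] [Field E] [AddCommGroup V] [Module E V]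
    (ρ : Representation E G V) (a : MonoidAlgebra E G) :
    tr E ρ.asModule a = LinearMap.trace E V (ρ.asAlgebraHom a) := by
  unfold tr
  rw [← LinearMap.trace_conj' _ ρ.asModuleEquiv]
  congr 1

end BN


/-- **Positive-characteristic Brauer–Nesbitt (Proposition 2.4).**
Let `G` be a group, `E` a field of characteristic `p`, and `n` a positive integer with
`p > n`. If `ρ₁, ρ₂ : G → GL_n(E)` are semisimple representations (i.e. the corresponding
`E[G]`-module `Eⁿ` is semisimple) with `tr (ρ₁ g) = tr (ρ₂ g)` for all `g ∈ G`,
then `ρ₁` and `ρ₂` are isomorphic, i.e. there is a `G`-equivariant `E`-linear isomorphism. -/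
theorem stmt_0 {G E : Type*} [Group G] [Field E] (p n : ℕ) [CharP E p]
    (hn : 0 < n) (hpn : n < p)
    (ρ₁ ρ₂ : Representation E G (Fin n → E))
    (hss₁ : IsSemisimpleModule (MonoidAlgebra E G) ρ₁.asModule)
    (hss₂ : IsSemisimpleModule (MonoidAlgebra E G) ρ₂.asModule)
    (htr : ∀ g : G, LinearMap.trace E (Fin n → E) (ρ₁ g) =
      LinearMap.trace E (Fin n → E) (ρ₂ g)) :
    ∃ f : (Fin n → E) ≃ₗ[E] (Fin n → E), ∀ (g : G) (x : Fin n → E),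
      f (ρ₁ g x) = ρ₂ g (f x) := by
  have hfr₁ : Module.finrank E ρ₁.asModule = n := by
    rw [ρ₁.asModuleEquiv.finrank_eq]; simp
  have hfr₂ : Module.finrank E ρ₂.asModule = n := by
    rw [ρ₂.asModuleEquiv.finrank_eq]; simp
  obtain ⟨e⟩ := BN.main (E := E) (A := MonoidAlgebra E G) p n ρ₁.asModule ρ₂.asModule
    (by omega) (by omega) hfr₁ (fun a => by
      rw [BN.tr_asModule, BN.tr_asModule]
      induction a using MonoidAlgebra.induction_on with
      | of g => simpa using htr g
      | add x y hx hy => simp [hx, hy]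
      | smul r x hx => simp [hx])
  refine ⟨ρ₁.asModuleEquiv.symm ≪≫ₗ e.restrictScalars E ≪≫ₗ ρ₂.asModuleEquiv, fun g x => ?_⟩
  change ρ₂.asModuleEquiv (e (ρ₁.asModuleEquiv.symm (ρ₁ g x))) =
    ρ₂ g (ρ₂.asModuleEquiv (e (ρ₁.asModuleEquiv.symm x)))
  rw [Representation.asModuleEquiv_symm_map_rho, map_smul, Representation.asModuleEquiv_map_smul,
    Representation.asAlgebraHom_of]
end

section
/- Let G be a group, H a normal subgroup of G, E a field, and V a nonzero finite-dimensional E-vector space. Let ρ₁, ρ₂ : G → GL(V) be representations such that: (a) every E-linear endomorphism of V that commutes with ρ₁(h) for all h ∈ H is multiplication by a scalar in E; and (b) there is an E-linear automorphism Φ of V with Φ ∘ ρ₁(h) = ρ₂(h) ∘ Φ for all h ∈ H. Then there exists a group homomorphism χ : G → Eˣ with χ(h) = 1 for all h ∈ H, such that Φ ∘ ρ₁(g) = χ(g) • (ρ₂(g) ∘ Φ) for all g ∈ G. In particular, either ρ₁ ≅ ρ₂ (when χ is trivial) or ρ₁ ≅ ρ₂ ⊗ χ for a nontrivial character χ factoring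 through G/H. -/
/-- **Lemma 3.2 (sharpened form).**
Let `G` be a group, `H ⊴ G` a normal subgroup, `E` a field, `V` a nonzero
finite-dimensional `E`-vector space, and `ρ₁, ρ₂ : G → GL(V)`. Assume:
(a) every `E`-endomorphism of `V` commuting with `ρ₁(h)` for all `h ∈ H` is a scalar; and
(b) there is an `E`-linear automorphism `Φ` of `V` with `Φ ∘ ρ₁(h) = ρ₂(h) ∘ Φ` for `h ∈ H`.
Then there is a character `χ : G → Eˣ`, trivial on `H`, with
`Φ ∘ ρ₁(g) = χ(g) • (ρ₂(g) ∘ Φ)` for all `g ∈ G`. -/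
theorem stmt_2 {G E V : Type*} [Group G] [Field E]
    [AddCommGroup V] [Module E V] [Nontrivial V] [FiniteDimensional E V]
    (H : Subgroup G) [H.Normal]
    (ρ₁ ρ₂ : G →* (V →ₗ[E] V)ˣ)
    (ha : ∀ f : V →ₗ[E] V,
      (∀ h ∈ H, f ∘ₗ (ρ₁ h : V →ₗ[E] V) = (ρ₁ h : V →ₗ[E] V) ∘ₗ f) →
        ∃ c : E, f = c • (LinearMap.id : V →ₗ[E] V))
    (Φ : V ≃ₗ[E] V)
    (hb : ∀ h ∈ H, (Φ : V →ₗ[E] V) ∘ₗ (ρ₁ h : V →ₗ[E] V) =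
      (ρ₂ h : V →ₗ[E] V) ∘ₗ (Φ : V →ₗ[E] V)) :
    ∃ χ : G →* Eˣ, (∀ h ∈ H, χ h = 1) ∧
      ∀ g : G, (Φ : V →ₗ[E] V) ∘ₗ (ρ₁ g : V →ₗ[E] V) =
        (χ g : E) • ((ρ₂ g : V →ₗ[E] V) ∘ₗ (Φ : V →ₗ[E] V)) := by
  let P : (V →ₗ[E] V)ˣ := LinearMap.GeneralLinearGroup.ofLinearEquiv Φ
  have hP : (P : V →ₗ[E] V) = (Φ : V →ₗ[E] V) := rfl
  let ι : Eˣ →* (V →ₗ[E] V)ˣ := Units.map (algebraMap E (Module.End E V)).toMonoidHom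
  have hιc : ∀ c, ((ι c : (V →ₗ[E] V)ˣ) : V →ₗ[E] V) = (c : E) • (LinearMap.id : V →ₗ[E] V) :=
    fun c => rfl
  have hι : Function.Injective ι :=
    Units.map_injective (FaithfulSMul.algebraMap_injective E (Module.End E V))
  have hcomm : ∀ c x, ι c * x = x * ι c := by
    intro c x
    apply Units.ext
    exact Algebra.commutes (c : E) (x : Module.End E V)
  have hb' : ∀ h ∈ H, P * ρ₁ h = ρ₂ h * P := fun h hh => Units.ext (hb h hh)
  have key : ∀ g, ∃ c : Eˣ, P * ρ₁ g = ι c * (ρ₂ g * P) := by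
    intro g
    set u : (V →ₗ[E] V)ˣ := P⁻¹ * (ρ₂ g)⁻¹ * P * ρ₁ g with hu
    have hc : ∀ h ∈ H, u * ρ₁ h = ρ₁ h * u := by
      intro h hh
      have h1 := hb' _ (Subgroup.Normal.conj_mem ‹H.Normal› h hh g)
      have h2 := hb' h hh
      have e1 : ρ₁ h = P⁻¹ * (ρ₂ h * P) := by rw [← h2]; group
      have e2 : P * ρ₁ g * ρ₁ h = ρ₂ g * ρ₂ h * (ρ₂ g)⁻¹ * P * ρ₁ g := by
        calc P * ρ₁ g * ρ₁ h = (P * ρ₁ (g * h * g⁻¹)) * ρ₁ g := by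
              simp [mul_assoc]
          _ = _ := by rw [h1]; simp [mul_assoc]
      calc u * ρ₁ h = P⁻¹ * (ρ₂ g)⁻¹ * (P * ρ₁ g * ρ₁ h) := by rw [hu]; group
        _ = P⁻¹ * (ρ₂ h * P) * u := by rw [e2, hu]; group
        _ = ρ₁ h * u := by rw [← e1]
    obtain ⟨c, hcu⟩ := ha u (fun h hh => congrArg Units.val (hc h hh))
    have hc0 : c ≠ 0 := by
      rintro rfl
      rw [zero_smul] at hcu
      exact u.ne_zero hcu
    refine ⟨Units.mk0 c hc0, ?_⟩
    have : u = ι (Units.mk0 c hc0) := Units.ext hcu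
    rw [hcomm, ← this, hu]
    group
  choose χ hχ using key
  have uniq : ∀ g c, P * ρ₁ g = ι c * (ρ₂ g * P) → χ g = c := by
    intro g c h
    rw [hχ g] at h
    exact hι (mul_right_cancel h)
  refine ⟨MonoidHom.mk' χ ?_, ?_, ?_⟩
  · intro a b
    apply uniq
    calc P * ρ₁ (a * b) = (P * ρ₁ a) * P⁻¹ * (P * ρ₁ b) := by rw [map_mul]; group
      _ = ι (χ a) * ρ₂ a * (ι (χ b) * (ρ₂ b * P)) := by rw [hχ a, hχ b]; group
      _ = ι (χ a) * (ρ₂ a * ι (χ b)) * (ρ₂ b * P) := by group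
      _ = _ := by rw [← hcomm, map_mul, map_mul]; group
  · intro h hh
    exact uniq h 1 (by rw [map_one, one_mul]; exact hb' h hh)
  · intro g
    have := congrArg Units.val (hχ g)
    exact this
end

section
/- Let G be a group, E a field, and V₁, V₂ finite-dimensional E-vector spaces. Let ρ₁ : G → GL(V₁) and ρ₂ : G → GL(V₂) be representations with tr(ρ₁(g)) = tr(ρ₂(g)) for all g ∈ G. Let A₂ denote the E-linear span of ρ₂(G) inside End_E(V₂), and assume that the trace bilinear form (x, y) ↦ tr(x ∘ y) restricted to A₂ is nondegenerate. Then for any finite family of scalars c_i ∈ E and elements g_i ∈ G, the relation Σ_i c_i ρ₁(g_i) = 0 in End_E(V₁) implies Σ_i c_i ρ₂(g_i) = 0 in End_E(V₂). -/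
/-- **Well-definedness of `Φ` (proof of Proposition 3.3).**
Let `ρ₁, ρ₂` be representations of a group `G` on finite-dimensional `E`-vector spaces
with `tr (ρ₁ g) = tr (ρ₂ g)` for all `g ∈ G`. Let `A₂` be the `E`-linear span of
`ρ₂(G)` in `End_E(V₂)` and assume the trace form `(x, y) ↦ tr (x ∘ y)` is
nondegenerate on `A₂`. Then `∑ cᵢ ρ₁(gᵢ) = 0` implies `∑ cᵢ ρ₂(gᵢ) = 0`. -/
theorem stmt_7 {G E : Type*} [Group G] [Field E]
    {V₁ V₂ : Type*} [AddCommGroup V₁] [Module E V₁] [AddCommGroup V₂] [Module E V₂]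
    [FiniteDimensional E V₁] [FiniteDimensional E V₂]
    (ρ₁ : Representation E G V₁) (ρ₂ : Representation E G V₂)
    (htr : ∀ g : G, LinearMap.trace E V₁ (ρ₁ g) = LinearMap.trace E V₂ (ρ₂ g))
    (hnd : ∀ x ∈ Submodule.span E (Set.range fun g : G => (ρ₂ g : V₂ →ₗ[E] V₂)),
      (∀ y ∈ Submodule.span E (Set.range fun g : G => (ρ₂ g : V₂ →ₗ[E] V₂)),
        LinearMap.trace E V₂ (x ∘ₗ y) = 0) → x = 0)
    (ι : Type*) [Fintype ι] (c : ι → E) (g : ι → G)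
    (h0 : ∑ i : ι, c i • (ρ₁ (g i) : V₁ →ₗ[E] V₁) = 0) :
    ∑ i : ι, c i • (ρ₂ (g i) : V₂ →ₗ[E] V₂) = 0 := by
  apply hnd
  · exact Submodule.sum_mem _ fun i _ =>
      Submodule.smul_mem _ _ (Submodule.subset_span ⟨g i, rfl⟩)
  · intro y hy
    induction hy using Submodule.span_induction with
    | mem y hy =>
      obtain ⟨k, rfl⟩ := hy
      have h1 : LinearMap.trace E V₁ ((∑ i : ι, c i • (ρ₁ (g i) : V₁ →ₗ[E] V₁)) ∘ₗ ρ₁ k) = 0 := by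
        rw [h0, LinearMap.zero_comp, map_zero]
      rw [← Module.End.mul_eq_comp, Finset.sum_mul, map_sum] at h1 ⊢
      rw [← h1]
      refine Finset.sum_congr rfl fun i _ => ?_
      have e1 : (ρ₁ (g i)) ∘ₗ ρ₁ k = ρ₁ (g i * k) := (map_mul ρ₁ _ _).symm
      have e2 : (ρ₂ (g i)) ∘ₗ ρ₂ k = ρ₂ (g i * k) := (map_mul ρ₂ _ _).symm
      rw [Module.End.mul_eq_comp, Module.End.mul_eq_comp, LinearMap.smul_comp, LinearMap.smul_comp, e1, e2, map_smul, map_smul, htr]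
    | zero => rw [LinearMap.comp_zero, map_zero]
    | add x y _ _ hx hy => rw [LinearMap.comp_add, map_add, hx, hy, add_zero]
    | smul a x _ hx => rw [LinearMap.comp_smul, map_smul, hx, smul_zero]
end
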